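/- Consider N ≥ 1 agents on a connected simple undirected graph G with neighbor sets N_i, a nonempty finite index set S, and for each i a nonempty compact convex set X_i ⊆ ℝ^{n_i}, a convex function f_i : ℝ^{n_i} → ℝ and a map g_i : ℝ^{n_i} → ℝ^S with every component convex. Assume: (a) there exist x̄_i ∈ X_i with ∑_i g_i(x̄_i) ≺ 0 componentwise (Slater condition), and let f* := inf{ ∑_i f_i(x_i) : x_i ∈ X_i, ∑_i g_i(x_i) ⪯ 0 }; (b) there exists μ* ∈ ℝ^S with μ* ⪰ 0 and inf{ ∑_i ( f_i(x_i) + ⟨μ*, g_i(x_i)⟩ ) : x_i ∈ X_i for all i } = f*, and M > ∑_s μ*_s; (c) step sizes γ^t ≥ 0 satisfy ∑_{t=0}^∞ γ^t = ∞ and ∑_{t=0}^∞ (γ^t)² < ∞. Suppose sequences λ^t : {1,…,N} × {1,…,N} → ℝ^S (with arbitrary λ^0), x_i^{t+1} ∈ ℝ^{n_i}, ρ_i^{t+1} ∈ ℝ and μ_i^{t+1} ∈ Δ_M satisfy for every t and every i, with δ_i^t := ∑_{j ∈ N_i} ( λ^t(i,j) − λ^t(j,i) ): (1) (x_i^{t+1},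 ρ_i^{t+1}) minimizes (x,ρ) ↦ f_i(x) + M ρ over { x ∈ X_i, ρ ≥ 0, g_i(x) + δ_i^t ⪯ ρ·𝟏 }; (2) μ_i^{t+1} maximizes μ ↦ q_i(μ) + ⟨μ, δ_i^t⟩ over Δ_M, where q_i(μ) := inf_{x ∈ X_i} ( f_i(x) + ⟨μ, g_i(x)⟩ ); (3) λ^{t+1}(i,j) = λ^t(i,j) − γ^t ( μ_i^{t+1} − μ_j^{t+1} ) for all adjacent pairs (i,j), and λ^{t+1}(i,j) = λ^t(i,j) otherwise. Then the sequence ∑_{i=1}^N ( f_i(x_i^t) + M ρ_i^t ) converges to f* as t → ∞. -/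

import Mathlib

theorem aux_local_duality {k : ℕ} {S : Type} [Fintype S] [Nonempty S]
    (X : Set (Fin k → ℝ)) (hne : X.Nonempty) (hcp : IsCompact X) (hcv : Convex ℝ X)
    (f : (Fin k → ℝ) → ℝ) (hf : ConvexOn ℝ Set.univ f)
    (g : (Fin k → ℝ) → (S → ℝ)) (hg : ∀ s, ConvexOn ℝ Set.univ (fun x => g x s))
    (M : ℝ) (hM : 0 ≤ M) (d : S → ℝ) :
    ∃ ν : S → ℝ, (∀ s, 0 ≤ ν s) ∧ ∑ s, ν s ≤ M ∧ ∃ a ∈ X, ∃ r : ℝ, 0 ≤ r ∧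
      (∀ s, g a s + d s ≤ r) ∧
      f a + M * r ≤ sInf {y | ∃ z ∈ X, f z + ∑ s, ν s * g z s = y} + ∑ s, ν s * d s := by
  classical
  set Y : Set (S → ℝ) := {ν | (∀ s, 0 ≤ ν s) ∧ ∑ s, ν s ≤ M} with hY
  set F : (Fin k → ℝ) → (S → ℝ) → ℝ := fun x ν => f x + ∑ s, ν s * (g x s + d s) with hF
  have hfc : Continuous f := hf.locallyLipschitz.continuous
  have hgc : ∀ s, Continuous (fun x => g x s) := fun s => (hg s).locallyLipschitz.continuous
  have hYne : Y.Nonempty := ⟨0, by simp [hY, hM]⟩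
  have hYcv : Convex ℝ Y := by
    intro u hu v hv a b ha hb hab
    refine ⟨fun s => ?_, ?_⟩
    · have := mul_nonneg ha (hu.1 s); have := mul_nonneg hb (hv.1 s)
      simp; linarith
    · have h1 : ∑ s, (a • u + b • v) s = a * ∑ s, u s + b * ∑ s, v s := by
        simp [Finset.sum_add_distrib, Finset.mul_sum]
      rw [h1]
      have := mul_le_mul_of_nonneg_left hu.2 ha
      have := mul_le_mul_of_nonneg_left hv.2 hb
      have : a * M + b * M = M := by rw [← add_mul, hab, one_mul]
      linarith
  have hYcp : IsCompact Y := by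
    have hcl : IsClosed Y := by
      have : Y = (⋂ s, {ν : S → ℝ | 0 ≤ ν s}) ∩ {ν | ∑ s, ν s ≤ M} := by
        ext ν; simp [hY]
      rw [this]
      refine IsClosed.inter (isClosed_iInter fun s => ?_) ?_
      · exact isClosed_le continuous_const (continuous_apply s)
      · exact isClosed_le (by fun_prop) continuous_const
    refine (isCompact_univ_pi (fun _ : S => isCompact_Icc (a := (0:ℝ)) (b := M))).of_isClosed_subset
      hcl ?_
    intro ν hν s _
    exact ⟨hν.1 s, (Finset.single_le_sum (fun s _ => hν.1 s) (Finset.mem_univ s)).trans hν.2⟩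
  have hcx : ∀ y ∈ Y, ConvexOn ℝ X (fun x => F x y) := by
    intro y hy
    have h1 : ConvexOn ℝ Set.univ (fun x => f x + ∑ s, y s * (g x s + d s)) := by
      refine ⟨convex_univ, fun u _ v _ a b ha hb hab => ?_⟩
      have e1 := hf.2 (Set.mem_univ u) (Set.mem_univ v) ha hb hab
      have e2 : ∑ s, y s * (g (a • u + b • v) s + d s) ≤
          ∑ s, (a * (y s * (g u s + d s)) + b * (y s * (g v s + d s))) := by
        refine Finset.sum_le_sum fun s _ => ?_
        have e3 := (hg s).2 (Set.mem_univ u) (Set.mem_univ v) ha hb hab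
        simp only [smul_eq_mul] at e3
        have e4 := mul_le_mul_of_nonneg_left e3 (hy.1 s)
        have e5 : y s * d s = a * (y s * d s) + b * (y s * d s) := by
          rw [← add_mul, hab, one_mul]
        nlinarith
      rw [Finset.sum_add_distrib, ← Finset.mul_sum, ← Finset.mul_sum] at e2
      simp only [smul_eq_mul] at e1 ⊢
      linarith
    exact h1.subset (Set.subset_univ _) hcv
  have hcy : ∀ x ∈ X, ConcaveOn ℝ Y (fun y => F x y) := by
    intro x _
    refine ⟨hYcv, fun u _ v _ a b ha hb hab => le_of_eq ?_⟩
    simp only [hF, smul_eq_mul, Pi.add_apply, Pi.smul_apply, mul_add, Finset.mul_sum, add_mul,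
      Finset.sum_add_distrib]
    have e : f x = a * f x + b * f x := by rw [← add_mul, hab, one_mul]
    simp only [mul_assoc]
    linarith
  obtain ⟨a, ha, b, hb, hsad⟩ := Sion.exists_isSaddlePointOn (f := F) hne hcv hcp
    (fun y _ => (Continuous.lowerSemicontinuous (by fun_prop)).lowerSemicontinuousOn X)
    (fun y hy => (hcx y hy).quasiconvexOn) hYcv hYne hYcp
    (fun x _ => (Continuous.upperSemicontinuous (by fun_prop)).upperSemicontinuousOn Y)
    (fun x hx => (hcy x hx).quasiconcaveOn)
  refine ⟨b, hb.1, hb.2, a, ha, ?_⟩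
  have key : ∀ y ∈ Y, F a y ≤ sInf {y | ∃ z ∈ X, f z + ∑ s, b s * g z s = y} + ∑ s, b s * d s := by
    intro y hy
    rw [← sub_le_iff_le_add]
    refine le_csInf ?_ ?_
    · obtain ⟨z, hz⟩ := hne
      exact ⟨_, z, hz, rfl⟩
    · rintro _ ⟨z, hz, rfl⟩
      have := hsad z hz y hy
      simp only [hF, mul_add, Finset.sum_add_distrib] at this ⊢
      linarith
  obtain ⟨s0, -, hs0⟩ := Finset.exists_max_image Finset.univ (fun s => g a s + d s)
    Finset.univ_nonempty
  by_cases hpos : 0 ≤ g a s0 + d s0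
  · refine ⟨g a s0 + d s0, hpos, fun s => hs0 s (Finset.mem_univ s), ?_⟩
    have := key (Pi.single s0 M) ⟨fun s => by
      by_cases h : s = s0
      · subst h; simpa using hM
      · simp [h], by simp⟩
    refine le_trans (le_of_eq ?_) this
    simp [hF, Pi.single_apply]
  · refine ⟨0, le_rfl, fun s => (hs0 s (Finset.mem_univ s)).trans (not_le.1 hpos).le, ?_⟩
    have := key 0 ⟨fun s => le_rfl, by simpa using hM⟩
    simpa [hF] using this

theorem aux_flow {N : ℕ} (hN : 1 ≤ N) (G : SimpleGraph (Fin N)) [DecidableRel G.Adj]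
    (hG : G.Connected) (d : Fin N → ℝ) (hd : ∑ i, d i = 0) :
    ∃ L : Fin N → Fin N → ℝ, ∀ i, ∑ j ∈ G.neighborFinset i, (L i j - L j i) = d i := by
  classical
  let W : Submodule ℝ (Fin N → ℝ) :=
    { carrier := {d | ∃ L : Fin N → Fin N → ℝ,
        ∀ i, ∑ j ∈ G.neighborFinset i, (L i j - L j i) = d i}
      zero_mem' := ⟨0, by simp⟩
      add_mem' := by
        rintro u v ⟨L, hL⟩ ⟨L', hL'⟩
        refine ⟨L + L', fun i => ?_⟩
        rw [show (u + v) i = u i + v i from rfl, ← hL, ← hL', ← Finset.sum_add_distrib]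
        exact Finset.sum_congr rfl fun j _ => by simp; ring
      smul_mem' := by
        rintro c v ⟨L, hL⟩
        refine ⟨c • L, fun i => ?_⟩
        rw [show (c • v) i = c * v i from rfl, ← hL, Finset.mul_sum]
        exact Finset.sum_congr rfl fun j _ => by simp; ring }
  have hadj : ∀ i j, G.Adj i j → (Pi.single i 1 - Pi.single j 1 : Fin N → ℝ) ∈ W := by
    intro i j hij
    refine ⟨fun a b => if a = i ∧ b = j then 1 else 0, fun k => ?_⟩
    have hne := hij.ne
    rw [Finset.sum_sub_distrib]
    have h1 : ∑ x ∈ G.neighborFinset k, (if k = i ∧ x = j then (1:ℝ) else 0)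
        = if k = i then 1 else 0 := by
      by_cases hk : k = i
      · subst hk; simp [hij]
      · simp [hk]
    have h2 : ∑ x ∈ G.neighborFinset k, (if x = i ∧ k = j then (1:ℝ) else 0)
        = if k = j then 1 else 0 := by
      by_cases hk : k = j
      · subst hk; simp [hij.symm]
      · simp [hk]
    rw [h1, h2]
    simp [Pi.single_apply]
  have hwalk : ∀ i j, G.Walk i j → (Pi.single i 1 - Pi.single j 1 : Fin N → ℝ) ∈ W := by
    intro i j p
    induction p with
    | nil => simp
    | cons h p ih =>
      have := W.add_mem (hadj _ _ h) ih
      simpa using this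
  let o : Fin N := ⟨0, hN⟩
  have hdW : d ∈ W := by
    have : d = ∑ i, d i • (Pi.single i 1 - Pi.single o 1 : Fin N → ℝ) := by
      simp only [smul_sub, Finset.sum_sub_distrib, ← Finset.sum_smul, hd, zero_smul, sub_zero]
      ext k
      simp [Pi.single_apply]
    rw [this]
    refine W.sum_mem fun i _ => W.smul_mem _ ?_
    obtain ⟨p⟩ := hG.preconnected i o
    exact hwalk i o p
  exact hdW

theorem aux_seq (a γ : ℕ → ℝ) (ha : ∀ t, 0 ≤ a t) (hγ : ∀ t, 0 ≤ γ t) (C : ℝ) (hC : 0 ≤ C)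
    (hstep : ∀ t, a (t+1) ≤ a t + C * γ t)
    (hdiv : Filter.Tendsto (fun T => ∑ t ∈ Finset.range T, γ t) Filter.atTop Filter.atTop)
    (hγ0 : Filter.Tendsto γ Filter.atTop (nhds 0))
    (hsum : Summable (fun t => γ t * a t)) :
    Filter.Tendsto a Filter.atTop (nhds 0) := by
  have hfreq : ∀ ε > 0, ∀ T, ∃ t ≥ T, a t < ε := by
    intro ε hε T
    by_contra! h
    have hs : Summable (fun t => γ (t + T)) := by
      have h1 : Summable (fun t => ε⁻¹ * (γ (t+T) * a (t+T))) :=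
        ((summable_nat_add_iff T).2 hsum).mul_left _
      refine Summable.of_nonneg_of_le (fun t => hγ _) (fun t => ?_) h1
      have := h (t+T) (by omega)
      rw [inv_mul_eq_div, le_div_iff₀ hε]
      exact mul_le_mul_of_nonneg_left this (hγ _)
    have hs' := ((summable_nat_add_iff T).1 hs).hasSum.tendsto_sum_nat
    exact not_tendsto_nhds_of_tendsto_atTop hdiv _ hs'
  rw [Metric.tendsto_atTop]
  intro ε' hε'
  set ε := ε' / 4 with hε
  have hεp : 0 < ε := by positivity
  have hs : Summable (fun t => C / ε * (γ t * a t)) := hsum.mul_left _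
  have hsn : ∀ t, 0 ≤ C / ε * (γ t * a t) := fun t =>
    mul_nonneg (by positivity) (mul_nonneg (hγ t) (ha t))
  have htail := tendsto_sum_nat_add (fun t => C / ε * (γ t * a t))
  have hCγ : Filter.Tendsto (fun t => C * γ t) Filter.atTop (nhds 0) := by
    simpa using hγ0.const_mul C
  obtain ⟨T0, hT0⟩ := Filter.eventually_atTop.1
    ((htail.eventually (gt_mem_nhds hεp)).and (hCγ.eventually (gt_mem_nhds hεp)))
  obtain ⟨T, hT, haT⟩ := hfreq ε hεp T0
  have hind : ∀ k, a (k + T) ≤ 2 * ε + ∑ t ∈ Finset.range k, C / ε * (γ (t+T) * a (t+T)) := by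
    intro k
    induction k with
    | zero => simp; linarith
    | succ k ih =>
      have h1 := hstep (k+T)
      have h2 := (hT0 (k+T) (by omega)).2
      have hr : k + 1 + T = k + T + 1 := by omega
      rw [hr]
      rcases lt_or_ge (a (k+T)) ε with h | h
      · have := Finset.sum_nonneg (s := Finset.range (k+1)) (fun t _ => hsn (t+T))
        linarith
      · rw [Finset.sum_range_succ]
        have : C * γ (k+T) ≤ C / ε * (γ (k+T) * a (k+T)) := by
          rw [div_mul_eq_mul_div, le_div_iff₀ hεp]
          have := mul_le_mul_of_nonneg_left h (mul_nonneg hC (hγ (k+T)))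
          linarith
        linarith
  refine ⟨T, fun t ht => ?_⟩
  obtain ⟨k, rfl⟩ := Nat.exists_eq_add_of_le' ht
  rw [Real.dist_eq, sub_zero, abs_of_nonneg (ha _)]
  have h1 := ((summable_nat_add_iff T).2 hs).sum_le_tsum (Finset.range k) (fun t _ => hsn (t+T))
  have h2 := (hT0 T hT).1
  have h3 := hind k
  linarith

theorem aux_parts {N : ℕ} (G : SimpleGraph (Fin N)) [DecidableRel G.Adj] {S : Type} [Fintype S]
    (w : Fin N → S → ℝ) (L : Fin N → Fin N → S → ℝ) :
    ∑ i, ∑ s, w i s * (∑ j ∈ G.neighborFinset i, (L i j s - L j i s)) =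
      ∑ s, ∑ i, ∑ j ∈ G.neighborFinset i, (w i s - w j s) * L i j s := by
  rw [Finset.sum_comm]
  refine Finset.sum_congr rfl fun s _ => ?_
  have hcv : ∀ (h : Fin N → Fin N → ℝ) i, ∑ j ∈ G.neighborFinset i, h i j
      = ∑ j, if G.Adj i j then h i j else 0 := by
    intro h i
    rw [← Finset.sum_filter]
    refine Finset.sum_congr ?_ fun _ _ => rfl
    ext j; simp
  simp only [mul_sub, sub_mul, Finset.sum_sub_distrib]
  congr 1
  · simp only [Finset.mul_sum]
  · simp only [Finset.mul_sum]
    simp only [hcv (fun i j => w i s * L j i s), hcv (fun i j => w j s * L i j s)]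
    rw [Finset.sum_comm]
    simp only [G.adj_comm]


/-- Theorem 1(i) of the paper: cost convergence of the DPDD algorithm.
Under the Slater condition, the exact-penalty condition `M > ∑_s μ*_s` on a dual
optimal multiplier `μ*`, and diminishing non-summable square-summable step sizes,
the sequence of local costs `∑_i (f_i(x_i^t) + M ρ_i^t)` produced by the
distributed primal decomposition-duality algorithm converges to the optimal cost
`f*` of the constraint-coupled problem. -/
theorem stmt_18 {N : ℕ} (hN : 1 ≤ N) {S : Type} [Fintype S] [Nonempty S]
    (G : SimpleGraph (Fin N)) [DecidableRel G.Adj] (hG : G.Connected)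
    (n : Fin N → ℕ)
    (X : ∀ i, Set (Fin (n i) → ℝ))
    (hXne : ∀ i, (X i).Nonempty) (hXcp : ∀ i, IsCompact (X i)) (hXcv : ∀ i, Convex ℝ (X i))
    (f : ∀ i, (Fin (n i) → ℝ) → ℝ) (hf : ∀ i, ConvexOn ℝ Set.univ (f i))
    (g : ∀ i, (Fin (n i) → ℝ) → (S → ℝ))
    (hg : ∀ i s, ConvexOn ℝ Set.univ (fun x => g i x s))
    -- (a) Slater condition and optimal value
    (hSlater : ∃ xbar : ∀ i, Fin (n i) → ℝ,
      (∀ i, xbar i ∈ X i) ∧ ∀ s, ∑ i, g i (xbar i) s < 0)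
    (fstar : ℝ)
    (hfstar : fstar = sInf {y | ∃ x : ∀ i, Fin (n i) → ℝ,
      (∀ i, x i ∈ X i) ∧ (∀ s, ∑ i, g i (x i) s ≤ 0) ∧ ∑ i, f i (x i) = y})
    -- (b) geometric multiplier and penalty parameter
    (μstar : S → ℝ) (hμpos : ∀ s, 0 ≤ μstar s)
    (hμopt : sInf {y | ∃ x : ∀ i, Fin (n i) → ℝ, (∀ i, x i ∈ X i) ∧
      (∑ i, (f i (x i) + ∑ s, μstar s * g i (x i) s)) = y} = fstar)
    (M : ℝ) (hM : M > ∑ s, μstar s)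
    -- (c) step sizes
    (γ : ℕ → ℝ) (hγpos : ∀ t, 0 ≤ γ t)
    (hγdiv : Filter.Tendsto (fun T => ∑ t ∈ Finset.range T, γ t) Filter.atTop Filter.atTop)
    (hγsq : Summable (fun t => (γ t) ^ 2))
    -- algorithm iterates
    (lam : ℕ → Fin N → Fin N → (S → ℝ))
    (x : ℕ → ∀ i, Fin (n i) → ℝ) (ρ : ℕ → Fin N → ℝ) (μ : ℕ → Fin N → (S → ℝ))
    -- (1) primal update: (x_i^{t+1}, ρ_i^{t+1}) solves the local relaxed problem
    (hprim : ∀ t i,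
      (x (t+1) i ∈ X i ∧ 0 ≤ ρ (t+1) i ∧
        (∀ s, g i (x (t+1) i) s
          + (∑ j ∈ G.neighborFinset i, (lam t i j s - lam t j i s)) ≤ ρ (t+1) i))
      ∧ ∀ (x' : Fin (n i) → ℝ) (r : ℝ), x' ∈ X i → 0 ≤ r →
          (∀ s, g i x' s + (∑ j ∈ G.neighborFinset i, (lam t i j s - lam t j i s)) ≤ r) →
          f i (x (t+1) i) + M * ρ (t+1) i ≤ f i x' + M * r)
    -- (2) dual update: μ_i^{t+1} maximizes q_i(·) + ⟨·, δ_i^t⟩ over Δ_M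
    (hdual : ∀ t i,
      ((∀ s, 0 ≤ μ (t+1) i s) ∧ ∑ s, μ (t+1) i s ≤ M)
      ∧ ∀ ν : S → ℝ, (∀ s, 0 ≤ ν s) → ∑ s, ν s ≤ M →
          sInf {y | ∃ z ∈ X i, f i z + ∑ s, ν s * g i z s = y}
            + ∑ s, ν s * (∑ j ∈ G.neighborFinset i, (lam t i j s - lam t j i s))
          ≤ sInf {y | ∃ z ∈ X i, f i z + ∑ s, μ (t+1) i s * g i z s = y}
            + ∑ s, μ (t+1) i s * (∑ j ∈ G.neighborFinset i, (lam t i j s - lam t j i s)))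
    -- (3) multiplier update
    (hlam : ∀ t i j, (G.Adj i j →
        lam (t+1) i j = lam t i j - γ t • (μ (t+1) i - μ (t+1) j))
      ∧ (¬ G.Adj i j → lam (t+1) i j = lam t i j)) :
    Filter.Tendsto (fun t => ∑ i, (f i (x t i) + M * ρ t i))
      Filter.atTop (nhds fstar) := by
  classical
  have hfc : ∀ i, Continuous (f i) := fun i => (hf i).locallyLipschitz.continuous
  have hgc : ∀ i s, Continuous (fun z => g i z s) := fun i s =>
    (hg i s).locallyLipschitz.continuous
  have hM0 : 0 ≤ M := (Finset.sum_nonneg fun s _ => hμpos s).trans hM.le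
  -- compact product of the local sets
  have hKcp : IsCompact (Set.univ.pi X) := isCompact_univ_pi hXcp
  -- a primal optimal solution
  obtain ⟨xs, hxsX, hxsg, hxsf⟩ : ∃ xs : ∀ i, Fin (n i) → ℝ, (∀ i, xs i ∈ X i) ∧
      (∀ s, ∑ i, g i (xs i) s ≤ 0) ∧ ∑ i, f i (xs i) ≤ fstar := by
    obtain ⟨xb, hxb, hxbg⟩ := hSlater
    have hcl : IsClosed {z : ∀ i, Fin (n i) → ℝ | ∀ s, ∑ i, g i (z i) s ≤ 0} := by
      rw [Set.setOf_forall]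
      refine isClosed_iInter fun s => isClosed_le ?_ continuous_const
      exact continuous_finsetSum _ fun i _ => (hgc i s).comp (continuous_apply i)
    obtain ⟨xs, hxs, hmin⟩ := (hKcp.inter_right hcl).exists_isMinOn
      (f := fun z : ∀ i, Fin (n i) → ℝ => ∑ i, f i (z i))
      ⟨xb, fun i _ => hxb i, fun s => (hxbg s).le⟩
      (continuous_finsetSum _ fun i _ => (hfc i).comp (continuous_apply i)).continuousOn
    refine ⟨xs, fun i => hxs.1 i (Set.mem_univ i), hxs.2, ?_⟩
    rw [hfstar]
    refine le_csInf ⟨_, xb, hxb, fun s => (hxbg s).le, rfl⟩ ?_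
    rintro _ ⟨z, hz, hzg, rfl⟩
    exact hmin ⟨fun i _ => hz i, hzg⟩
  -- the optimal allocation
  have hNpos : (0 : ℝ) < N := by exact_mod_cast hN
  have hflow : ∀ s, ∃ L : Fin N → Fin N → ℝ, ∀ i, ∑ j ∈ G.neighborFinset i, (L i j - L j i)
      = - g i (xs i) s + (∑ k, g k (xs k) s) / N := by
    intro s
    refine aux_flow hN G hG _ ?_
    rw [Finset.sum_add_distrib, Finset.sum_const, Finset.card_univ, Fintype.card_fin,
      Finset.sum_neg_distrib, nsmul_eq_mul, mul_div_cancel₀ _ hNpos.ne']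
    ring
  choose Ls0 hLs0 using hflow
  set Ls : Fin N → Fin N → S → ℝ := fun i j s => Ls0 s i j with hLs
  have hLsd : ∀ i s, g i (xs i) s + ∑ j ∈ G.neighborFinset i, (Ls i j s - Ls j i s) ≤ 0 := by
    intro i s
    simp only [hLs]
    rw [hLs0 s i]
    have : (∑ k, g k (xs k) s) / N ≤ 0 := div_nonpos_of_nonpos_of_nonneg (hxsg s) hNpos.le
    linarith
  set dl : (Fin N → Fin N → S → ℝ) → Fin N → S → ℝ :=
    fun L i s => ∑ j ∈ G.neighborFinset i, (L i j s - L j i s) with hdl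
  set q : Fin N → (S → ℝ) → ℝ := fun i ν => sInf {y | ∃ z ∈ X i, f i z + ∑ s, ν s * g i z s = y}
    with hq
  set V : ℕ → ℝ := fun t => ∑ i, (f i (x (t+1) i) + M * ρ (t+1) i) with hV
  have hqle : ∀ i ν, ∀ z ∈ X i, q i ν ≤ f i z + ∑ s, ν s * g i z s := by
    intro i ν z hz
    refine csInf_le ?_ ⟨z, hz, rfl⟩
    have hc : ContinuousOn (fun z => f i z + ∑ s, ν s * g i z s) (X i) :=
      ((hfc i).add (continuous_finsetSum _ fun s _ =>
        continuous_const.mul (hgc i s))).continuousOn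
    exact ((hXcp i).image_of_continuousOn hc).bddBelow
  -- penalty inequality
  have hpen : ∀ t i (ν : S → ℝ), (∀ s, 0 ≤ ν s) → ∑ s, ν s ≤ M →
      f i (x (t+1) i) + ∑ s, ν s * g i (x (t+1) i) s + ∑ s, ν s * dl (lam t) i s
        ≤ f i (x (t+1) i) + M * ρ (t+1) i := by
    intro t i ν hν hνM
    obtain ⟨⟨-, hρ, hfe⟩, -⟩ := hprim t i
    have h1 : ∑ s, ν s * g i (x (t+1) i) s + ∑ s, ν s * dl (lam t) i s
        ≤ ∑ s, ν s * ρ (t+1) i := by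
      rw [← Finset.sum_add_distrib]
      refine Finset.sum_le_sum fun s _ => ?_
      rw [← mul_add]
      exact mul_le_mul_of_nonneg_left (hfe s) (hν s)
    rw [← Finset.sum_mul] at h1
    have := mul_le_mul_of_nonneg_right hνM hρ
    linarith
  have hweak : ∀ t i (ν : S → ℝ), (∀ s, 0 ≤ ν s) → ∑ s, ν s ≤ M →
      q i ν + ∑ s, ν s * dl (lam t) i s ≤ f i (x (t+1) i) + M * ρ (t+1) i := by
    intro t i ν hν hνM
    have h1 := hqle i ν _ (hprim t i).1.1
    have h2 := hpen t i ν hν hνM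
    linarith
  have hstrong : ∀ t i, f i (x (t+1) i) + M * ρ (t+1) i
      ≤ q i (μ (t+1) i) + ∑ s, μ (t+1) i s * dl (lam t) i s := by
    intro t i
    obtain ⟨ν, hν, hνM, a, ha, r, hr, har, hle⟩ := aux_local_duality (X i) (hXne i) (hXcp i)
      (hXcv i) (f i) (hf i) (g i) (hg i) M hM0 (dl (lam t) i)
    have h1 := (hprim t i).2 a r ha hr har
    have h2 := (hdual t i).2 ν hν hνM
    exact h1.trans (hle.trans h2)
  -- lower bound
  have hlow : ∀ t, fstar ≤ V t := by
    intro t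
    have h1 : fstar ≤ ∑ i, (f i (x (t+1) i) + ∑ s, μstar s * g i (x (t+1) i) s) := by
      rw [← hμopt]
      refine csInf_le ?_ ⟨x (t+1), fun i => (hprim t i).1.1, rfl⟩
      have hc : Continuous (fun z : ∀ i, Fin (n i) → ℝ =>
          ∑ i, (f i (z i) + ∑ s, μstar s * g i (z i) s)) :=
        continuous_finsetSum _ fun i _ => ((hfc i).comp (continuous_apply i)).add
          (continuous_finsetSum _ fun s _ => continuous_const.mul
            ((hgc i s).comp (continuous_apply i)))
      refine (hKcp.image_of_continuousOn hc.continuousOn).bddBelow.mono ?_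
      rintro _ ⟨z, hz, rfl⟩
      exact ⟨z, fun i _ => hz i, rfl⟩
    have h2 := Finset.sum_le_sum fun i (_ : i ∈ Finset.univ) => hpen t i μstar hμpos hM.le
    rw [Finset.sum_add_distrib] at h2
    have h3 : ∑ i, ∑ s, μstar s * dl (lam t) i s = 0 := by
      have := aux_parts G (fun _ => μstar) (lam t)
      simp only [sub_self, zero_mul, Finset.sum_const_zero] at this
      exact this
    simp only [hV]
    linarith
  set C : ℝ := ∑ s : S, ∑ i, ∑ _j ∈ G.neighborFinset i, M ^ 2 with hC
  have hC0 : 0 ≤ C := Finset.sum_nonneg fun s _ => Finset.sum_nonneg fun i _ =>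
    Finset.sum_nonneg fun j _ => sq_nonneg M
  have hμdiff : ∀ t i j s, |μ (t+1) i s - μ (t+1) j s| ≤ M := by
    intro t i j s
    have hb : ∀ i, 0 ≤ μ (t+1) i s ∧ μ (t+1) i s ≤ M := fun i =>
      ⟨(hdual t i).1.1 s, (Finset.single_le_sum (fun s _ => (hdual t i).1.1 s)
        (Finset.mem_univ s)).trans (hdual t i).1.2⟩
    rw [abs_le]
    constructor <;> linarith [(hb i).1, (hb i).2, (hb j).1, (hb j).2]
  have hupd : ∀ t i j s, j ∈ G.neighborFinset i →
      lam (t+1) i j s = lam t i j s - γ t * (μ (t+1) i s - μ (t+1) j s) := by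
    intro t i j s hj
    rw [(hlam t i j).1 (by simpa using hj)]
    simp
  have hdlsub : ∀ L L' i s, dl L i s - dl L' i s = dl (fun i j s => L i j s - L' i j s) i s := by
    intro L L' i s
    simp only [hdl]
    rw [← Finset.sum_sub_distrib]
    exact Finset.sum_congr rfl fun j _ => by ring
  -- upper (subgradient) bound
  have hup : ∀ t, V t - fstar ≤ ∑ s, ∑ i, ∑ j ∈ G.neighborFinset i,
      (μ (t+1) i s - μ (t+1) j s) * (lam t i j s - Ls i j s) := by
    intro t
    rw [← aux_parts G (μ (t+1)) (fun i j s => lam t i j s - Ls i j s)]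
    have h1 : ∀ i, f i (x (t+1) i) + M * ρ (t+1) i - f i (xs i) ≤
        ∑ s, μ (t+1) i s * dl (fun i j s => lam t i j s - Ls i j s) i s := by
      intro i
      have e1 := hstrong t i
      have e2 := hqle i (μ (t+1) i) _ (hxsX i)
      have e3 : ∑ s, μ (t+1) i s * (g i (xs i) s + dl Ls i s) ≤ 0 :=
        Finset.sum_nonpos fun s _ => mul_nonpos_of_nonneg_of_nonpos ((hdual t i).1.1 s) (hLsd i s)
      simp only [mul_add, Finset.sum_add_distrib] at e3
      simp only [← hdlsub, mul_sub, Finset.sum_sub_distrib]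
      linarith
    have h2 := Finset.sum_le_sum fun i (_ : i ∈ Finset.univ) => h1 i
    rw [Finset.sum_sub_distrib] at h2
    simp only [hV]
    refine le_trans ?_ h2
    linarith
  -- one-sided Lipschitz bound
  have hstep : ∀ t, V (t+1) - fstar ≤ V t - fstar + C * γ t := by
    intro t
    have h1 : ∀ i, f i (x (t+1+1) i) + M * ρ (t+1+1) i - (f i (x (t+1) i) + M * ρ (t+1) i) ≤
        ∑ s, μ (t+1+1) i s * dl (fun i j s => lam (t+1) i j s - lam t i j s) i s := by
      intro i
      have e1 := hstrong (t+1) i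
      have e2 := hweak t i (μ (t+1+1) i) (hdual (t+1) i).1.1 (hdual (t+1) i).1.2
      simp only [← hdlsub, mul_sub, Finset.sum_sub_distrib]
      linarith
    have h2 := Finset.sum_le_sum fun i (_ : i ∈ Finset.univ) => h1 i
    rw [Finset.sum_sub_distrib] at h2
    have h3 := aux_parts G (μ (t+1+1)) (fun i j s => lam (t+1) i j s - lam t i j s)
    have h4 : ∑ s, ∑ i, ∑ j ∈ G.neighborFinset i,
        (μ (t+1+1) i s - μ (t+1+1) j s) * (lam (t+1) i j s - lam t i j s) ≤ C * γ t := by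
      rw [hC]
      simp only [Finset.sum_mul]
      refine Finset.sum_le_sum fun s _ => Finset.sum_le_sum fun i _ =>
        Finset.sum_le_sum fun j hj => ?_
      rw [hupd t i j s hj]
      have e1 : |(μ (t+1+1) i s - μ (t+1+1) j s) * (μ (t+1) i s - μ (t+1) j s)| ≤ M ^ 2 := by
        rw [abs_mul, sq]
        exact mul_le_mul (hμdiff _ _ _ _) (hμdiff _ _ _ _) (abs_nonneg _) hM0
      have e2 := (abs_le.1 e1).1
      have e3 := mul_le_mul_of_nonneg_right e2 (hγpos t)
      linarith
    have h5 := h2.trans ((le_of_eq h3).trans h4)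
    simp only [hV]
    linarith
  -- Lyapunov decrease
  set D : ℕ → ℝ := fun t => ∑ s, ∑ i, ∑ j ∈ G.neighborFinset i, (lam t i j s - Ls i j s) ^ 2 with hD
  have hD0 : ∀ t, 0 ≤ D t := fun t => Finset.sum_nonneg fun s _ => Finset.sum_nonneg fun i _ =>
    Finset.sum_nonneg fun j _ => sq_nonneg _
  have hDstep : ∀ t, D (t+1) ≤ D t - 2 * (γ t * (V t - fstar)) + C * γ t ^ 2 := by
    intro t
    have h1 : D (t+1) ≤ D t - 2 * γ t * (∑ s, ∑ i, ∑ j ∈ G.neighborFinset i,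
        (μ (t+1) i s - μ (t+1) j s) * (lam t i j s - Ls i j s)) + C * γ t ^ 2 := by
      simp only [hD, hC, Finset.mul_sum, Finset.sum_mul, ← Finset.sum_sub_distrib,
        ← Finset.sum_add_distrib]
      refine Finset.sum_le_sum fun s _ => Finset.sum_le_sum fun i _ =>
        Finset.sum_le_sum fun j hj => ?_
      rw [hupd t i j s hj]
      have e1 : (μ (t+1) i s - μ (t+1) j s) ^ 2 ≤ M ^ 2 := by
        rw [← sq_abs]
        exact pow_le_pow_left₀ (abs_nonneg _) (hμdiff _ _ _ _) 2
      have e2 := mul_le_mul_of_nonneg_right e1 (sq_nonneg (γ t))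
      nlinarith
    have h2 := mul_le_mul_of_nonneg_left (hup t) (hγpos t)
    linarith
  have hsumm : Summable (fun t => γ t * (V t - fstar)) := by
    have hnn : ∀ t, 0 ≤ γ t * (V t - fstar) := fun t =>
      mul_nonneg (hγpos t) (sub_nonneg.2 (hlow t))
    refine summable_of_sum_range_le (c := D 0 + C * ∑' t, γ t ^ 2) hnn fun T => ?_
    have h1 : 2 * ∑ t ∈ Finset.range T, γ t * (V t - fstar) + D T
        ≤ D 0 + C * ∑ t ∈ Finset.range T, γ t ^ 2 := by
      induction T with
      | zero => simp
      | succ T ih =>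
        rw [Finset.sum_range_succ, Finset.sum_range_succ]
        have := hDstep T
        linarith
    have h2 := mul_le_mul_of_nonneg_left
      (hγsq.sum_le_tsum (Finset.range T) (fun t _ => sq_nonneg (γ t))) hC0
    have h3 := Finset.sum_nonneg fun t (_ : t ∈ Finset.range T) => hnn t
    have h4 := hD0 T
    linarith
  have hγ0 : Filter.Tendsto γ Filter.atTop (nhds 0) := by
    have := hγsq.tendsto_atTop_zero.sqrt
    simpa [Real.sqrt_sq, hγpos] using this
  have hfin := aux_seq (fun t => V t - fstar) γ (fun t => sub_nonneg.2 (hlow t)) hγpos C hC0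
    hstep hγdiv hγ0 hsumm
  rw [← Filter.tendsto_add_atTop_iff_nat 1]
  have := hfin.add_const fstar
  simpa [hV] using this
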